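/- The spectrum of the free discrete Dirac operator D with mass m ≥ 0 is exactly the set [−√(m²+4), −m] ∪ [m, √(m²+4)]. -/

import Mathlib

noncomputable section

/-- The Hilbert space `ℓ²(ℕ⁺, ℂ²)`. -/
abbrev DiracSpace : Type := lp (fun _ : ℕ+ => EuclideanSpace ℂ (Fin 2)) 2

/-- The component `φ^σₙ` of an element `Φ ∈ ℓ²(ℕ⁺, ℂ²)` (σ = 0 is `+`, σ = 1 is `−`). -/
def comp2 (Φ : DiracSpace) (n : ℕ+) (i : Fin 2) : ℂ :=
  (Φ : ∀ _ : ℕ+, EuclideanSpace ℂ (Fin 2)) n i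

/-- `D` acts as the free discrete Dirac operator with mass `m`. -/
def IsDiracOp (m : ℝ) (D : DiracSpace →L[ℂ] DiracSpace) : Prop :=
  ∀ Φ : DiracSpace,
    (∀ n : ℕ+, comp2 (D Φ) n 0 =
        (m : ℂ) * comp2 Φ n 0 + comp2 Φ n 1 - comp2 Φ (n + 1) 1) ∧
    (comp2 (D Φ) 1 1 = comp2 Φ 1 0 - (m : ℂ) * comp2 Φ 1 1) ∧
    (∀ n : ℕ+, comp2 (D Φ) (n + 1) 1 =
        comp2 Φ (n + 1) 0 - comp2 Φ n 0 - (m : ℂ) * comp2 Φ (n + 1) 1)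


section

def pp (Φ : DiracSpace) (k : ℕ) : ℂ := comp2 Φ k.succPNat 0
def qq (Φ : DiracSpace) (k : ℕ) : ℂ := comp2 Φ k.succPNat 1

theorem hasSum_inner_pq (Φ Ψ : DiracSpace) :
    HasSum (fun k : ℕ => pp Ψ k * star (pp Φ k) + qq Ψ k * star (qq Φ k)) (inner ℂ Φ Ψ) := by
  have h := lp.hasSum_inner (𝕜 := ℂ) Φ Ψ
  rw [← Equiv.pnatEquivNat.symm.hasSum_iff] at h
  have e : (fun k : ℕ => pp Ψ k * star (pp Φ k) + qq Ψ k * star (qq Φ k)) =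
      (fun i => inner ℂ (Φ i) (Ψ i)) ∘ Equiv.pnatEquivNat.symm := by
    funext k
    simp [pp, qq, comp2, PiLp.inner_apply, Fin.sum_univ_two, Equiv.pnatEquivNat]
  rw [e]
  exact h

theorem hasSum_norm_pq (Φ : DiracSpace) :
    HasSum (fun k : ℕ => Complex.normSq (pp Φ k) + Complex.normSq (qq Φ k)) (‖Φ‖ ^ 2) := by
  have h := Complex.hasSum_re (hasSum_inner_pq Φ Φ)
  have e : (inner ℂ Φ Φ : ℂ).re = ‖Φ‖ ^ 2 := by
    rw [inner_self_eq_norm_sq_to_K]; norm_cast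
  rw [e] at h
  convert h using 2 with k
  simp [Complex.normSq_apply]

theorem tendsto_pq (Φ : DiracSpace) :
    Filter.Tendsto (pp Φ) Filter.atTop (nhds 0) ∧ Filter.Tendsto (qq Φ) Filter.atTop (nhds 0) := by
  have h := (hasSum_norm_pq Φ).summable.tendsto_atTop_zero
  have h2 : Filter.Tendsto (fun k => Real.sqrt (Complex.normSq (pp Φ k) + Complex.normSq (qq Φ k)))
      Filter.atTop (nhds 0) := by
    simpa [Function.comp_def] using (Real.continuous_sqrt.tendsto 0).comp h
  constructor
  · refine squeeze_zero_norm (fun k => ?_) h2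
    apply Real.le_sqrt_of_sq_le
    rw [Complex.normSq_eq_norm_sq, Complex.normSq_eq_norm_sq]
    nlinarith [sq_nonneg ‖qq Φ k‖]
  · refine squeeze_zero_norm (fun k => ?_) h2
    apply Real.le_sqrt_of_sq_le
    rw [Complex.normSq_eq_norm_sq, Complex.normSq_eq_norm_sq]
    nlinarith [sq_nonneg ‖pp Φ k‖]

theorem pp_D {m : ℝ} {D : DiracSpace →L[ℂ] DiracSpace} (hD : IsDiracOp m D) (Φ : DiracSpace)
    (k : ℕ) : pp (D Φ) k = m * pp Φ k + qq Φ k - qq Φ (k + 1) := (hD Φ).1 k.succPNat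

theorem qq_D_zero {m : ℝ} {D : DiracSpace →L[ℂ] DiracSpace} (hD : IsDiracOp m D)
    (Φ : DiracSpace) : qq (D Φ) 0 = pp Φ 0 - m * qq Φ 0 := (hD Φ).2.1

theorem qq_D_succ {m : ℝ} {D : DiracSpace →L[ℂ] DiracSpace} (hD : IsDiracOp m D)
    (Φ : DiracSpace) (k : ℕ) :
    qq (D Φ) (k + 1) = pp Φ (k + 1) - pp Φ k - m * qq Φ (k + 1) := (hD Φ).2.2 k.succPNat

theorem dirac_symm {m : ℝ} {D : DiracSpace →L[ℂ] DiracSpace} (hD : IsDiracOp m D)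
    (Φ Ψ : DiracSpace) : (inner ℂ (D Φ) Ψ : ℂ) = inner ℂ Φ (D Ψ) := by
  have h := ((hasSum_inner_pq (D Φ) Ψ).sub (hasSum_inner_pq Φ (D Ψ))).tendsto_sum_nat
  have h := (Filter.tendsto_add_atTop_iff_nat 1).2 h
  have key : ∀ N : ℕ, ∑ k ∈ Finset.range (N + 1),
      (pp Ψ k * star (pp (D Φ) k) + qq Ψ k * star (qq (D Φ) k)
        - (pp (D Ψ) k * star (pp Φ k) + qq (D Ψ) k * star (qq Φ k)))
      = qq Ψ (N + 1) * star (pp Φ N) - pp Ψ N * star (qq Φ (N + 1)) := by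
    intro N
    induction N with
    | zero =>
      simp [pp_D hD, qq_D_zero hD]
      ring
    | succ N ih =>
      rw [Finset.sum_range_succ, ih]
      simp [pp_D hD, qq_D_succ hD]
      ring
  simp only [key] at h
  have hl : Filter.Tendsto (fun N : ℕ => qq Ψ (N + 1) * star (pp Φ N)
      - pp Ψ N * star (qq Φ (N + 1))) Filter.atTop (nhds (0 * star 0 - 0 * star 0)) := by
    refine Filter.Tendsto.sub (Filter.Tendsto.mul ?_ ?_) (Filter.Tendsto.mul ?_ ?_)
    · exact (Filter.tendsto_add_atTop_iff_nat 1).2 (tendsto_pq Ψ).2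
    · exact (tendsto_pq Φ).1.star
    · exact (tendsto_pq Ψ).1
    · exact ((Filter.tendsto_add_atTop_iff_nat 1).2 (tendsto_pq Φ).2).star
  have := tendsto_nhds_unique h hl
  simpa [sub_eq_zero] using this

theorem dirac_bounds {m : ℝ} {D : DiracSpace →L[ℂ] DiracSpace} (hD : IsDiracOp m D)
    (Φ : DiracSpace) :
    m ^ 2 * ‖Φ‖ ^ 2 ≤ ‖D Φ‖ ^ 2 ∧ ‖D Φ‖ ^ 2 ≤ (m ^ 2 + 4) * ‖Φ‖ ^ 2 := by
  have h := ((hasSum_norm_pq (D Φ)).sub ((hasSum_norm_pq Φ).mul_left (m ^ 2))).tendsto_sum_nat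
  have h := (Filter.tendsto_add_atTop_iff_nat 1).2 h
  have h' := ((hasSum_norm_pq (D Φ)).sub
    ((hasSum_norm_pq Φ).mul_left (m ^ 2 + 4))).tendsto_sum_nat
  have h' := (Filter.tendsto_add_atTop_iff_nat 1).2 h'
  have hu : Filter.Tendsto (fun N : ℕ => -(2 * m * (pp Φ N * star (qq Φ (N + 1))).re))
      Filter.atTop (nhds 0) := by
    have : Filter.Tendsto (fun N : ℕ => -(2 * m * (pp Φ N * star (qq Φ (N + 1))).re))
      Filter.atTop (nhds (-(2 * m * ((0 : ℂ) * star 0).re))) := by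
      refine (((Complex.continuous_re.tendsto _).comp (Filter.Tendsto.mul (tendsto_pq Φ).1
        ((Filter.tendsto_add_atTop_iff_nat 1).2 (tendsto_pq Φ).2).star)).const_mul _).neg
    simpa using this
  have hv : Filter.Tendsto (fun N : ℕ => -(2 * m * (pp Φ N * star (qq Φ (N + 1))).re)
      + 2 * Complex.normSq (qq Φ (N + 1))) Filter.atTop (nhds 0) := by
    have : Filter.Tendsto (fun N : ℕ => Complex.normSq (qq Φ (N + 1))) Filter.atTop
        (nhds (Complex.normSq 0)) :=
      (Complex.continuous_normSq.tendsto _).comp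
        ((Filter.tendsto_add_atTop_iff_nat 1).2 (tendsto_pq Φ).2)
    simpa using hu.add (this.const_mul 2)
  constructor
  · have := le_of_tendsto_of_tendsto' hu h (fun N => by
      induction N with
      | zero =>
        simp [pp_D hD, qq_D_zero hD, Complex.normSq_apply]
        nlinarith [sq_nonneg ((qq Φ 0).re - (qq Φ 1).re), sq_nonneg ((qq Φ 0).im - (qq Φ 1).im),
          sq_nonneg (pp Φ 0).re, sq_nonneg (pp Φ 0).im]
      | succ N ih =>
        rw [Finset.sum_range_succ]
        refine le_trans ?_ (add_le_add_left ih _)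
        simp [pp_D hD, qq_D_succ hD, Complex.normSq_apply]
        nlinarith [sq_nonneg ((qq Φ (N+1)).re - (qq Φ (N+1+1)).re),
          sq_nonneg ((qq Φ (N+1)).im - (qq Φ (N+1+1)).im),
          sq_nonneg ((pp Φ (N+1)).re - (pp Φ N).re), sq_nonneg ((pp Φ (N+1)).im - (pp Φ N).im)])
    linarith
  · have := le_of_tendsto_of_tendsto' (h'.add (tendsto_const_nhds (x := (0:ℝ)))) hv (fun N => by
      have : ∑ k ∈ Finset.range (N + 1), (Complex.normSq (pp (D Φ) k) + Complex.normSq (qq (D Φ) k)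
          - (m ^ 2 + 4) * (Complex.normSq (pp Φ k) + Complex.normSq (qq Φ k)))
          ≤ -(2 * m * (pp Φ N * star (qq Φ (N + 1))).re)
      + 2 * Complex.normSq (qq Φ (N + 1)) - 2 * Complex.normSq (pp Φ N) := by
        induction N with
        | zero =>
          simp [pp_D hD, qq_D_zero hD, Complex.normSq_apply]
          nlinarith [sq_nonneg ((qq Φ 0).re + (qq Φ 1).re), sq_nonneg ((qq Φ 0).im + (qq Φ 1).im),
            sq_nonneg (pp Φ 0).re, sq_nonneg (pp Φ 0).im, sq_nonneg (qq Φ 0).re,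
            sq_nonneg (qq Φ 0).im]
        | succ N ih =>
          rw [Finset.sum_range_succ]
          refine le_trans (add_le_add_left ih _) ?_
          simp [pp_D hD, qq_D_succ hD, Complex.normSq_apply]
          nlinarith [sq_nonneg ((qq Φ (N+1)).re + (qq Φ (N+1+1)).re),
            sq_nonneg ((qq Φ (N+1)).im + (qq Φ (N+1+1)).im),
            sq_nonneg ((pp Φ (N+1)).re + (pp Φ N).re), sq_nonneg ((pp Φ (N+1)).im + (pp Φ N).im)]
      have := Complex.normSq_nonneg (pp Φ N)
      linarith)
    linarith

theorem spec_quad {D : DiracSpace →L[ℂ] DiracSpace} (hs : IsSelfAdjoint D) (e c : ℝ)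
    (h : ∀ x, 0 ≤ e * ‖D x‖ ^ 2 + c * ‖x‖ ^ 2) {l : ℝ} (hl : l ∈ spectrum ℝ D) :
    0 ≤ e * l ^ 2 + c := by
  have h1 := spectrum.subset_polynomial_aeval D
    (Polynomial.C e * Polynomial.X ^ 2 + Polynomial.C c) ⟨l, hl, rfl⟩
  have hsym := ContinuousLinearMap.isSelfAdjoint_iff_isSymmetric.1 hs
  have h2 : 0 ≤ e • (D ^ 2) + c • (1 : DiracSpace →L[ℂ] DiracSpace) := by
    rw [ContinuousLinearMap.nonneg_iff_isPositive, ContinuousLinearMap.isPositive_def']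
    constructor
    · have he : ∀ a : ℝ, IsSelfAdjoint (a : ℂ) := fun a => Complex.conj_ofReal a
      have := ((he e).smul (hs.pow 2)).add
        ((he c).smul (IsSelfAdjoint.one (DiracSpace →L[ℂ] DiracSpace)))
      rwa [Complex.coe_smul, Complex.coe_smul] at this
    · intro x
      have e1 : (inner ℂ (D (D x)) x : ℂ).re = ‖D x‖ ^ 2 := by
        have := hsym (D x) x
        simp only [ContinuousLinearMap.coe_coe] at this
        rw [this, inner_self_eq_norm_sq_to_K]; norm_cast
      have e2 : (inner ℂ x x : ℂ).re = ‖x‖ ^ 2 := by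
        rw [inner_self_eq_norm_sq_to_K]; norm_cast
      have := h x
      rw [← e1, ← e2] at this
      simpa [ContinuousLinearMap.reApplyInnerSelf, pow_two, inner_add_left,
        inner_smul_left_eq_smul] using this
  have h3 := spectrum_nonneg_of_nonneg (𝕜 := ℝ) h2 (x := e * l ^ 2 + c) (by
    simpa [Algebra.algebraMap_eq_smul_one] using h1)
  exact h3

/-- the plane wave `(α, β) wⁿ` cut off at `n ≤ N`. -/
def wave (α β w : ℂ) (N : ℕ) : DiracSpace :=
  ⟨fun n : ℕ+ => if (n : ℕ) ≤ N then !₂[α * w ^ (n : ℕ), β * w ^ (n : ℕ)] else 0, by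
    refine Memℓp.of_exponent_ge (q := 0) (memℓp_zero ?_) (by simp)
    refine Set.Finite.subset (Set.finite_Iic (N.succPNat)) ?_
    intro n hn
    by_contra hc
    apply hn
    rw [if_neg]
    intro h
    apply hc
    rw [Set.mem_Iic, ← PNat.coe_le_coe]
    simp
    omega⟩

theorem pp_wave (α β w : ℂ) (N k : ℕ) :
    pp (wave α β w N) k = if k + 1 ≤ N then α * w ^ (k + 1) else 0 := by
  change (if k + 1 ≤ N then !₂[α * w ^ (k + 1), β * w ^ (k + 1)] else 0 :
    EuclideanSpace ℂ (Fin 2)) 0 = _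
  by_cases h : k + 1 ≤ N
  · rw [if_pos h, if_pos h]; simp
  · rw [if_neg h, if_neg h]; simp

theorem qq_wave (α β w : ℂ) (N k : ℕ) :
    qq (wave α β w N) k = if k + 1 ≤ N then β * w ^ (k + 1) else 0 := by
  change (if k + 1 ≤ N then !₂[α * w ^ (k + 1), β * w ^ (k + 1)] else 0 :
    EuclideanSpace ℂ (Fin 2)) 1 = _
  by_cases h : k + 1 ≤ N
  · rw [if_pos h, if_pos h]; simp
  · rw [if_neg h, if_neg h]; simp

theorem norm_wave (α β w : ℂ) (hw : ‖w‖ = 1) (N : ℕ) :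
    ‖wave α β w N‖ ^ 2 = N * (‖α‖ ^ 2 + ‖β‖ ^ 2) := by
  rw [← (hasSum_norm_pq _).tsum_eq, tsum_eq_sum (s := Finset.range N)]
  · rw [Finset.sum_congr rfl (g := fun _ => ‖α‖ ^ 2 + ‖β‖ ^ 2)]
    · simp [mul_add]
    · intro k hk
      have hk : k + 1 ≤ N := by simpa using hk
      simp [pp_wave, qq_wave, hk, Complex.normSq_eq_norm_sq, hw]
  · intro k hk
    have hk : ¬ (k + 1 ≤ N) := by simpa using hk
    simp [pp_wave, qq_wave, hk]

theorem norm_err {m : ℝ} {D : DiracSpace →L[ℂ] DiracSpace} (hD : IsDiracOp m D)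
    (l : ℝ) (α β w : ℂ) (hw : ‖w‖ = 1)
    (h1 : m * α + (1 - w) * β = l * α) (h2 : (w - 1) * α - m * β * w = l * β * w) (N : ℕ) :
    ‖D (wave α β w (N + 1)) - (l : ℂ) • wave α β w (N + 1)‖ ^ 2 ≤ 2 * ‖α‖ ^ 2 + ‖β‖ ^ 2 := by
  set W := wave α β w (N + 1) with hW
  have hp : ∀ k, pp (D W - (l : ℂ) • W) k = pp (D W) k - l * pp W k := fun k => rfl
  have hq : ∀ k, qq (D W - (l : ℂ) • W) k = qq (D W) k - l * qq W k := fun k => rfl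
  have hb : ∀ k, Complex.normSq (pp (D W - (l : ℂ) • W) k) ≤ if k = N then ‖β‖ ^ 2 else 0 := by
    intro k
    rw [hp, pp_D hD]
    rcases lt_trichotomy k N with h | h | h
    · have a : k + 1 ≤ N + 1 := by omega
      have b : k + 1 + 1 ≤ N + 1 := by omega
      have : (m * pp W k + qq W k - qq W (k + 1) - l * pp W k : ℂ) = 0 := by
        simp only [hW, pp_wave, qq_wave, a, b, if_true]
        linear_combination (w ^ (k + 1)) * h1
      rw [this, if_neg h.ne]; simp
    · subst h
      have : (m * pp W k + qq W k - qq W (k + 1) - l * pp W k : ℂ) = β * w ^ (k + 2) := by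
        simp only [hW, pp_wave, qq_wave, le_refl, if_true]
        rw [if_neg (by omega)]
        linear_combination (w ^ (k + 1)) * h1
      rw [this]; simp [Complex.normSq_eq_norm_sq, hw]
    · have a : ¬ k + 1 ≤ N + 1 := by omega
      have b : ¬ k + 1 + 1 ≤ N + 1 := by omega
      have : (m * pp W k + qq W k - qq W (k + 1) - l * pp W k : ℂ) = 0 := by
        simp only [hW, pp_wave, qq_wave, a, b, if_false]
        ring
      rw [this, if_neg h.ne']; simp
  have hc : ∀ k, Complex.normSq (qq (D W - (l : ℂ) • W) k) ≤
      (if k = 0 then ‖α‖ ^ 2 else 0) + (if k = N + 1 then ‖α‖ ^ 2 else 0) := by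
    intro k
    rw [hq]
    rcases k with _ | k
    · rw [qq_D_zero hD]
      have : (pp W 0 - m * qq W 0 - l * qq W 0 : ℂ) = α := by
        simp only [hW, pp_wave, qq_wave]
        simp
        linear_combination h2
      rw [this]; simp [Complex.normSq_eq_norm_sq]
    rw [qq_D_succ hD]
    rcases lt_trichotomy k N with h | h | h
    · have a : k + 1 ≤ N + 1 := by omega
      have b : k + 1 + 1 ≤ N + 1 := by omega
      have : (pp W (k + 1) - pp W k - m * qq W (k + 1) - l * qq W (k + 1) : ℂ) = 0 := by
        simp only [hW, pp_wave, qq_wave, a, b, if_true]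
        linear_combination (w ^ (k + 1)) * h2
      rw [this]; simp [h.ne]
    · subst h
      have : (pp W (k + 1) - pp W k - m * qq W (k + 1) - l * qq W (k + 1) : ℂ)
          = - (α * w ^ (k + 1)) := by
        simp only [hW, pp_wave, qq_wave, le_refl, if_true]
        rw [if_neg (by omega), if_neg (by omega)]
        ring
      rw [this]; simp [Complex.normSq_eq_norm_sq, hw]
    · have a : ¬ k + 1 ≤ N + 1 := by omega
      have b : ¬ k + 1 + 1 ≤ N + 1 := by omega
      have : (pp W (k + 1) - pp W k - m * qq W (k + 1) - l * qq W (k + 1) : ℂ) = 0 := by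
        simp only [hW, pp_wave, qq_wave, a, b, if_false]
        ring
      rw [this]; simp [h.ne']
  have s := (hasSum_ite_eq N (‖β‖ ^ 2)).add
    ((hasSum_ite_eq 0 (‖α‖ ^ 2)).add (hasSum_ite_eq (N + 1) (‖α‖ ^ 2)))
  have := hasSum_le (fun k => add_le_add (hb k) (hc k))
    (hasSum_norm_pq (D W - (l : ℂ) • W)) s
  linarith

theorem mem_of_wave {m : ℝ} {D : DiracSpace →L[ℂ] DiracSpace} (hD : IsDiracOp m D)
    (l : ℝ) (α β w : ℂ) (hw : ‖w‖ = 1) (hne : α ≠ 0 ∨ β ≠ 0)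
    (h1 : m * α + (1 - w) * β = l * α) (h2 : (w - 1) * α - m * β * w = l * β * w) :
    (l : ℂ) ∈ spectrum ℂ D := by
  rw [spectrum.mem_iff]
  rintro ⟨u, hu⟩
  set R : DiracSpace →L[ℂ] DiracSpace := (↑u⁻¹ : DiracSpace →L[ℂ] DiracSpace) with hR
  have hinv : ∀ x, ‖x‖ ≤ ‖R‖ * ‖D x - (l : ℂ) • x‖ := by
    intro x
    have e : R * (u : DiracSpace →L[ℂ] DiracSpace) = 1 := u.inv_mul
    have e2 : R ((l : ℂ) • x - D x) = x := by
      have := congrArg (fun T : DiracSpace →L[ℂ] DiracSpace => T x) e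
      rw [hu] at this
      simpa [Algebra.algebraMap_eq_smul_one, -Complex.coe_smul] using this
    calc ‖x‖ = ‖R ((l : ℂ) • x - D x)‖ := by rw [e2]
      _ ≤ ‖R‖ * ‖(l : ℂ) • x - D x‖ := R.le_opNorm _
      _ = _ := by rw [norm_sub_rev]
  have hpos : 0 < ‖α‖ ^ 2 + ‖β‖ ^ 2 := by
    rcases hne with h | h
    · have := norm_pos_iff.2 h; positivity
    · have := norm_pos_iff.2 h; positivity
  obtain ⟨N, hN⟩ := exists_nat_gt (‖R‖ ^ 2 * (2 * ‖α‖ ^ 2 + ‖β‖ ^ 2) / (‖α‖ ^ 2 + ‖β‖ ^ 2))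
  rw [div_lt_iff₀ hpos] at hN
  have b1 := hinv (wave α β w (N + 1))
  have b2 := norm_err hD l α β w hw h1 h2 N
  have b3 := norm_wave α β w hw (N + 1)
  have b4 := pow_le_pow_left₀ (norm_nonneg _) b1 2
  rw [mul_pow, b3] at b4
  have b5 := mul_le_mul_of_nonneg_left b2 (sq_nonneg ‖R‖)
  push_cast at b4
  nlinarith

theorem exists_phase (s : ℝ) (h0 : 0 ≤ s) (h4 : s ≤ 4) :
    ∃ w : ℂ, ‖w‖ = 1 ∧ (w - 1) * (1 - w) = s * w := by
  have hn : 0 ≤ 1 - (1 - s / 2) ^ 2 := by nlinarith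
  have hq := Real.sq_sqrt hn
  refine ⟨⟨1 - s / 2, Real.sqrt (1 - (1 - s / 2) ^ 2)⟩, ?_, ?_⟩
  · rw [← sq_eq_sq₀ (norm_nonneg _) zero_le_one, Complex.sq_norm, Complex.normSq_apply]
    simp only
    nlinarith
  · apply Complex.ext
    · simp
      nlinarith
    · simp
      ring

end

/-- the spectrum of the free discrete Dirac operator with mass `m ≥ 0` is
exactly `[−√(m²+4), −m] ∪ [m, √(m²+4)]`. -/
theorem free_dirac_spectrum (m : ℝ) (hm : 0 ≤ m)
    (D : DiracSpace →L[ℂ] DiracSpace) (hD : IsDiracOp m D) :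
    spectrum ℂ D = (fun x : ℝ => (x : ℂ)) ''
      (Set.Icc (-Real.sqrt (m ^ 2 + 4)) (-m) ∪ Set.Icc m (Real.sqrt (m ^ 2 + 4))) := by
  have hsa : IsSelfAdjoint D :=
    ContinuousLinearMap.isSelfAdjoint_iff_isSymmetric.2 (fun x y => dirac_symm hD x y)
  have h4 : 0 ≤ m ^ 2 + 4 := by positivity
  have hsq := Real.sq_sqrt h4
  have hs0 := Real.sqrt_nonneg (m ^ 2 + 4)
  ext z
  constructor
  · intro hz
    have hre := hsa.mem_spectrum_eq_re hz
    rw [hre] at hz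
    have hz' : z.re ∈ spectrum ℝ D := (spectrum.algebraMap_mem_iff ℂ).1 hz
    have l1 := spec_quad hsa 1 (-m ^ 2) (fun x => by nlinarith [(dirac_bounds hD x).1]) hz'
    have l2 := spec_quad hsa (-1) (m ^ 2 + 4) (fun x => by
      nlinarith [(dirac_bounds hD x).2]) hz'
    refine ⟨z.re, ?_, hre.symm⟩
    have hb : |z.re| ≤ Real.sqrt (m ^ 2 + 4) := Real.abs_le_sqrt (by linarith)
    have ha : |m| ≤ |z.re| := sq_le_sq.1 (by linarith)
    rw [abs_of_nonneg hm] at ha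
    have hb' := abs_le.1 hb
    rcases le_abs.1 ha with h | h
    · exact Or.inr ⟨h, hb'.2⟩
    · exact Or.inl ⟨hb'.1, by linarith⟩
  · rintro ⟨l, hl, rfl⟩
    have hl2 : m ^ 2 ≤ l ^ 2 ∧ l ^ 2 ≤ m ^ 2 + 4 := by
      rcases hl with ⟨a, b⟩ | ⟨a, b⟩
      · constructor <;> nlinarith
      · constructor <;> nlinarith
    by_cases hlm : l = m
    · subst hlm
      exact mem_of_wave hD l 1 0 1 (by simp) (by simp) (by simp) (by simp)
    · obtain ⟨w, hw, hww⟩ := exists_phase (l ^ 2 - m ^ 2) (by linarith) (by linarith)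
      push_cast at hww
      refine mem_of_wave hD l (1 - w) (l - m) w hw (Or.inr ?_) (by ring)
        (by linear_combination hww)
      exact sub_ne_zero.2 (by exact_mod_cast hlm)
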